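/- There exists a 2-(24,4,1) packing with 42 blocks whose leave is a vertex-disjoint union of four cycles of length 3 and one cycle of length 12, covering all 24 points (leave type 3^4 12^1). -/

import Mathlib

/-!
The packing is given explicitly; its properties are finite checks on its incidence table.

Label the points so that the intended leave consists of the triangles
`{3i, 3i+1, 3i+2}` for `i < 4` and the 12-cycle `12, 13, …, 23`. A packing with this leave
is the same as an exact cover of the remaining 252 pairs by the 6 pairs of each of 42 blocks.
Such a cover, with blocks numbered from 0 to 41 in this order, is

  {0,3,7,22} {0,4,19,23} {0,5,18,21} {0,6,12,16} {0,8,9,15} {0,10,14,17} {0,11,13,20}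
  {1,3,8,13} {1,4,16,22} {1,5,15,17} {1,6,9,21} {1,7,14,20} {1,10,18,23} {1,11,12,19}
  {2,3,17,19} {2,4,15,20} {2,5,8,12} {2,6,11,22} {2,7,10,16} {2,9,13,18} {2,14,21,23}
  {3,6,14,18} {3,9,16,23} {3,10,12,20} {3,11,15,21} {4,6,13,17} {4,7,11,18} {4,8,10,21}
  {4,9,12,14} {5,6,20,23} {5,7,9,19} {5,10,13,22} {5,11,14,16} {6,10,15,19} {7,12,17,21}
  {7,13,15,23} {8,11,17,23} {8,14,19,22} {8,16,18,20} {9,17,20,22} {12,15,18,22} {13,16,19,21}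

It is invariant under the involution
`(0 10)(1 11)(2 9)(3 4)(7 8)(12 19)(13 18)(14 17)(15 16)(20 23)(21 22)`, which fixes `5` and `6`
and preserves the leave.

The packing is encoded by its rows: `incidence p` is the number whose binary digits mark the
blocks through `p`, so the blocks through both `p` and `q` are marked by the bitwise conjunction
of two rows. For `p ≠ q` that number is a power of two or zero (`incidence_and`), which is the
packing property, and it is zero exactly when `p` and `q` are neighbours in one of the
five cycles (`incidence_and_eq_zero_iff`).
-/

/-- A 2-(24,4,1) packing: a collection of 4-element blocks on 24 points such that
every pair of distinct points lies in at most one block. -/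
def IsPacking (B : Finset (Finset (Fin 24))) : Prop :=
  (∀ b ∈ B, b.card = 4) ∧
  ∀ p q : Fin 24, p ≠ q → ∀ b₁ ∈ B, ∀ b₂ ∈ B,
    p ∈ b₁ → q ∈ b₁ → p ∈ b₂ → q ∈ b₂ → b₁ = b₂

/-- Adjacency in the leave of a packing: the pair of distinct points is covered by no block. -/
def LeaveAdj (B : Finset (Finset (Fin 24))) (p q : Fin 24) : Prop :=
  p ≠ q ∧ ∀ b ∈ B, ¬ (p ∈ b ∧ q ∈ b)

/-- The leave of the packing `B` is a vertex-disjoint union of cycles whose lengths are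
given by the list `L`, covering all 24 points. -/
def LeaveIsCycleType (B : Finset (Finset (Fin 24))) (L : List ℕ) : Prop :=
  ∃ f : (i : Fin L.length) → ZMod (L.get i) → Fin 24,
    Function.Bijective (fun x : Σ i : Fin L.length, ZMod (L.get i) => f x.1 x.2) ∧
    ∀ p q : Fin 24, LeaveAdj B p q ↔
      ∃ i k, (p = f i k ∧ q = f i (k + 1)) ∨ (q = f i k ∧ p = f i (k + 1))

/-- The numbers of the blocks through each point. -/
def blocksThrough : Fin 24 → List ℕ :=
  ![[0, 1, 2, 3, 4, 5, 6],
    [7, 8, 9, 10, 11, 12, 13],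
    [14, 15, 16, 17, 18, 19, 20],
    [0, 7, 14, 21, 22, 23, 24],
    [1, 8, 15, 25, 26, 27, 28],
    [2, 9, 16, 29, 30, 31, 32],
    [3, 10, 17, 21, 25, 29, 33],
    [0, 11, 18, 26, 30, 34, 35],
    [4, 7, 16, 27, 36, 37, 38],
    [4, 10, 19, 22, 28, 30, 39],
    [5, 12, 18, 23, 27, 31, 33],
    [6, 13, 17, 24, 26, 32, 36],
    [3, 13, 16, 23, 28, 34, 40],
    [6, 7, 19, 25, 31, 35, 41],
    [5, 11, 20, 21, 28, 32, 37],
    [4, 9, 15, 24, 33, 35, 40],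
    [3, 8, 18, 22, 32, 38, 41],
    [5, 9, 14, 25, 34, 36, 39],
    [2, 12, 19, 21, 26, 38, 40],
    [1, 13, 14, 30, 33, 37, 41],
    [6, 11, 15, 23, 29, 38, 39],
    [2, 10, 20, 24, 27, 34, 41],
    [0, 8, 17, 31, 37, 39, 40],
    [1, 12, 20, 22, 29, 35, 36]]

/-- The rows of the incidence table: block `j` contains the point `p` if and only if bit `j` of
`incidence p` is set. -/
def incidence (p : Fin 24) : ℕ :=
  (blocksThrough p).foldr (fun j s => 1 <<< j + s) 0

/-- The block with number `j`. -/
def block (j : Fin 42) : Finset (Fin 24) :=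
  Finset.univ.filter fun p => (incidence p).testBit j

/-- The packing, as the set of all its blocks. -/
def packingBlocks : Finset (Finset (Fin 24)) :=
  Finset.univ.image block

/-- The `k`-th vertex of the `i`-th leave cycle: since the first four cycles have length 3,
cycle `i` occupies the consecutive points starting at `3 * i`. -/
def leaveCycle (i : Fin [3, 3, 3, 3, 12].length) (k : ZMod ([3, 3, 3, 3, 12].get i)) : Fin 24 :=
  Fin.ofNat 24 (3 * i.val + k.val)

/-- The point that follows `p` on its leave cycle. -/
def cycleSucc (p : Fin 24) : Fin 24 :=
  if p = 23 then 12 else if p < 12 ∧ p.val % 3 = 2 then p - 2 else p + 1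

/-! ### Finite checks -/

instance leaveCycleLengthNeZero (i : Fin [3, 3, 3, 3, 12].length) :
    NeZero ([3, 3, 3, 3, 12].get i) :=
  ⟨by revert i; decide⟩

/-- Two distinct points are on at most one common block: the set of common blocks, as a binary
number, is zero or a single power of two. -/
theorem incidence_and : ∀ p q : Fin 24, p ≠ q →
    incidence p &&& incidence q = 0 ∨
      (incidence p &&& incidence q = 2 ^ (incidence p &&& incidence q).log2 ∧
        (incidence p &&& incidence q).log2 < 42) := by
  decide +kernel

theorem incidence_and_eq_zero_iff : ∀ p q : Fin 24,
    (p ≠ q ∧ incidence p &&& incidence q = 0) ↔ (q = cycleSucc p ∨ p = cycleSucc q) := by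
  decide +kernel

theorem block_card : ∀ j : Fin 42, (block j).card = 4 := by
  decide +kernel

theorem leaveCycle_add_one : ∀ (i : Fin [3, 3, 3, 3, 12].length)
    (k : ZMod ([3, 3, 3, 3, 12].get i)), leaveCycle i (k + 1) = cycleSucc (leaveCycle i k) := by
  decide +kernel

theorem leaveCycle_bijective :
    Function.Bijective
      (fun x : Σ i : Fin [3, 3, 3, 3, 12].length, ZMod ([3, 3, 3, 3, 12].get i) =>
        leaveCycle x.1 x.2) := by
  rw [Fintype.bijective_iff_surjective_and_card]
  exact ⟨by unfold Function.Surjective; decide +kernel, by decide +kernel⟩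

/-! ### The packing and its leave -/

theorem mem_block {p : Fin 24} {j : Fin 42} : p ∈ block j ↔ (incidence p).testBit j = true := by
  simp [block]

theorem mem_block_and {p q : Fin 24} {j : Fin 42} :
    (p ∈ block j ∧ q ∈ block j) ↔ (incidence p &&& incidence q).testBit j = true := by
  rw [mem_block, mem_block, Nat.testBit_and, Bool.and_eq_true]

theorem block_index_unique {p q : Fin 24} (hpq : p ≠ q) {j k : Fin 42}
    (hj : p ∈ block j ∧ q ∈ block j) (hk : p ∈ block k ∧ q ∈ block k) : j = k := by
  rw [mem_block_and] at hj hk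
  rcases incidence_and p q hpq with h | ⟨h, -⟩
  · simp [h] at hj
  · rw [h, Nat.testBit_two_pow, decide_eq_true_eq] at hj hk
    exact Fin.ext (hj.symm.trans hk)

/-- Equal blocks have equal numbers, because a block contains two distinct points. -/
theorem block_injective : Function.Injective block := by
  intro j k hjk
  obtain ⟨p, hp, q, hq, hpq⟩ := Finset.one_lt_card.mp (by rw [block_card j]; norm_num)
  exact block_index_unique hpq ⟨hp, hq⟩ (hjk ▸ ⟨hp, hq⟩)

theorem packingBlocks_isPacking : IsPacking packingBlocks := by
  simp only [IsPacking, packingBlocks, Finset.mem_image, Finset.mem_univ, true_and]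
  refine ⟨?_, ?_⟩
  · rintro _ ⟨j, rfl⟩
    exact block_card j
  · rintro p q hpq _ ⟨j, rfl⟩ _ ⟨k, rfl⟩ hp hq hp' hq'
    rw [block_index_unique hpq ⟨hp, hq⟩ ⟨hp', hq'⟩]

theorem packingBlocks_card : packingBlocks.card = 42 := by
  rw [packingBlocks, Finset.card_image_of_injective _ block_injective, Finset.card_univ,
    Fintype.card_fin]

theorem leaveAdj_packingBlocks_iff_and (p q : Fin 24) :
    LeaveAdj packingBlocks p q ↔ (p ≠ q ∧ incidence p &&& incidence q = 0) := by
  refine and_congr_right fun hpq => ?_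
  simp only [packingBlocks, Finset.forall_mem_image, Finset.mem_univ, true_implies, mem_block_and]
  refine ⟨fun h => ?_, fun h j => by simp [h]⟩
  rcases incidence_and p q hpq with h0 | ⟨h1, hlt⟩
  · exact h0
  · refine absurd ?_ (@h ⟨_, hlt⟩)
    dsimp only
    rw [h1]
    simp

theorem leaveAdj_packingBlocks_iff (p q : Fin 24) :
    LeaveAdj packingBlocks p q ↔
      ∃ i k, (p = leaveCycle i k ∧ q = leaveCycle i (k + 1)) ∨
        (q = leaveCycle i k ∧ p = leaveCycle i (k + 1)) := by
  rw [leaveAdj_packingBlocks_iff_and, incidence_and_eq_zero_iff]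
  simp only [leaveCycle_add_one]
  constructor
  · rintro (h | h)
    · obtain ⟨⟨i, k⟩, hk⟩ := leaveCycle_bijective.surjective p
      exact ⟨i, k, Or.inl ⟨hk.symm, h.trans (congrArg cycleSucc hk.symm)⟩⟩
    · obtain ⟨⟨i, k⟩, hk⟩ := leaveCycle_bijective.surjective q
      exact ⟨i, k, Or.inr ⟨hk.symm, h.trans (congrArg cycleSucc hk.symm)⟩⟩
  · rintro ⟨i, k, ⟨hp, hq⟩ | ⟨hq, hp⟩⟩
    · exact Or.inl (by rw [hq, hp])
    · exact Or.inr (by rw [hp, hq])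

/-- There is a 2-(24,4,1) packing with 42 blocks whose leave is a vertex-disjoint
union of cycles of lengths [3, 3, 3, 3, 12], covering all 24 points. -/
theorem exists_max_packing_with_leave_type :
    ∃ B : Finset (Finset (Fin 24)), IsPacking B ∧ B.card = 42 ∧
      LeaveIsCycleType B [3, 3, 3, 3, 12] :=
  ⟨packingBlocks, packingBlocks_isPacking, packingBlocks_card,
    leaveCycle, leaveCycle_bijective, leaveAdj_packingBlocks_iff⟩
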